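/- arXiv:1512.02670 — 2 statements merged into one kernel-verified Lean document; each statement's English description precedes it below -/
import Mathlib

section
/- Let K > 0 and suppose that for every finite set P ⊆ ℝ² \ {0} the number of quadruples (q,q',r,r') ∈ P⁴ with ω(q,q') = ω(r,r') ≠ 0 is at most K·|P|³. Then there exists a constant c > 0 depending only on K such that for every δ > 0 and every finite set A ⊆ ℝ \ {0} with |A| ≥ 2 satisfying |AA| ≤ |A|^(1+δ), one has |A + A| ≥ c·|A|^(2−3δ) and |A − A| ≥ c·|A|^(2−3δ). -/
open Finset
open scoped Pointwise Classical

/-- The standard non-degenerate skew-symmetric bilinear form on `ℝ²`. -/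
noncomputable def omegaForm (q q' : ℝ × ℝ) : ℝ := q.1 * q'.2 - q.2 * q'.1

/-- The number of quadruples `(q,q',r,r') ∈ P⁴` with `ω(q,q') = ω(r,r') ≠ 0`. -/
noncomputable def omegaEnergy (P : Finset (ℝ × ℝ)) : ℕ :=
  ((P ×ˢ P ×ˢ P ×ˢ P).filter fun x =>
      omegaForm x.1 x.2.1 = omegaForm x.2.2.1 x.2.2.2 ∧
      omegaForm x.1 x.2.1 ≠ 0).card

/-- Nontrivial additive quadruples. -/
noncomputable def ntQuads (A : Finset ℝ) : Finset (ℝ × ℝ × ℝ × ℝ) :=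
  (A ×ˢ A ×ˢ A ×ˢ A).filter fun x => x.1 - x.2.1 = x.2.2.1 - x.2.2.2 ∧ x.1 - x.2.1 ≠ 0

lemma ntQuads_le (A : Finset ℝ) (h0 : (0 : ℝ) ∉ A) :
    (ntQuads A).card * A.card ^ 4 ≤ omegaEnergy ((A * A) ×ˢ A⁻¹) := by
  have hc : (ntQuads A ×ˢ (A ×ˢ A ×ˢ A ×ˢ A)).card = (ntQuads A).card * A.card ^ 4 := by
    simp only [card_product]; ring
  rw [← hc]
  have hne : ∀ a ∈ A, a ≠ 0 := fun a ha h => h0 (h ▸ ha)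
  unfold omegaEnergy
  apply Finset.card_le_card_of_injOn (fun x : (ℝ × ℝ × ℝ × ℝ) × (ℝ × ℝ × ℝ × ℝ) =>
    ((x.1.1 * x.2.1, (x.2.2.1)⁻¹), (x.1.2.1 * x.2.2.1, (x.2.1)⁻¹),
      (x.1.2.2.1 * x.2.2.2.1, (x.2.2.2.2)⁻¹), (x.1.2.2.2 * x.2.2.2.2, (x.2.2.2.1)⁻¹)))
  · rintro ⟨⟨a, b, c, d⟩, e, f, g, h⟩ hx
    simp only [ntQuads, coe_product, Set.mem_prod, mem_coe, mem_filter, mem_product] at hx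
    obtain ⟨⟨⟨ha, hb, hc, hd⟩, h1, h2⟩, he, hf, hg, hh⟩ := hx
    have e0 := hne e he
    have f0 := hne f hf
    have g0 := hne g hg
    have h0 := hne h hh
    have k1 : omegaForm (a * e, f⁻¹) (b * f, e⁻¹) = a - b := by
      simp only [omegaForm]; field_simp
    have k2 : omegaForm (c * g, h⁻¹) (d * h, g⁻¹) = c - d := by
      simp only [omegaForm]; field_simp
    simp only [mem_coe, mem_filter, mem_product, k1, k2]
    exact ⟨⟨⟨mul_mem_mul ha he, inv_mem_inv hf⟩, ⟨mul_mem_mul hb hf, inv_mem_inv he⟩,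
      ⟨mul_mem_mul hc hg, inv_mem_inv hh⟩, ⟨mul_mem_mul hd hh, inv_mem_inv hg⟩⟩, h1, h2⟩
  · rintro ⟨⟨a, b, c, d⟩, e, f, g, h⟩ hx ⟨⟨a', b', c', d'⟩, e', f', g', h'⟩ _ heq
    simp only [ntQuads, coe_product, Set.mem_prod, mem_coe, mem_filter, mem_product] at hx
    obtain ⟨_, he, hf, hg, hh⟩ := hx
    have e0 := hne e he
    have f0 := hne f hf
    have g0 := hne g hg
    have h0 := hne h hh
    simp only [Prod.mk.injEq, inv_inj] at heq
    obtain ⟨⟨h1, rfl⟩, ⟨h2, rfl⟩, ⟨h3, rfl⟩, ⟨h4, rfl⟩⟩ := heq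
    rw [mul_left_inj' e0] at h1
    rw [mul_left_inj' f0] at h2
    rw [mul_left_inj' g0] at h3
    rw [mul_left_inj' h0] at h4
    subst h1 h2 h3 h4
    rfl

lemma trivial_le (A : Finset ℝ) :
    ((A ×ˢ A ×ˢ A ×ˢ A).filter fun x => x.1 - x.2.1 = x.2.2.1 - x.2.2.2).card
      ≤ A.card ^ 2 + (ntQuads A).card := by
  have : ((A ×ˢ A ×ˢ A ×ˢ A).filter fun x => x.1 - x.2.1 = x.2.2.1 - x.2.2.2) ⊆
      ((A ×ˢ A).image fun y => (y.1, y.1, y.2, y.2)) ∪ ntQuads A := by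
    rintro ⟨a, b, c, d⟩ hx
    simp only [mem_filter, mem_product] at hx
    obtain ⟨⟨ha, hb, hc, hd⟩, h⟩ := hx
    rw [mem_union]
    by_cases hab : a - b = 0
    · left
      have h1 : a = b := sub_eq_zero.1 hab
      have h2 : c = d := sub_eq_zero.1 (h ▸ hab)
      subst h1 h2
      exact mem_image.2 ⟨(a, c), mem_product.2 ⟨ha, hc⟩, rfl⟩
    · right
      simp only [ntQuads, mem_filter, mem_product]
      exact ⟨⟨ha, hb, hc, hd⟩, h, hab⟩
  refine (card_le_card this).trans ((card_union_le _ _).trans ?_)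
  gcongr
  refine card_image_le.trans ?_
  rw [card_product, sq]

lemma energy_add_le (A : Finset ℝ) : addEnergy A A ≤ A.card ^ 2 + (ntQuads A).card := by
  refine le_trans ?_ (trivial_le A)
  unfold addEnergy
  apply Finset.card_le_card_of_injOn (fun x : (ℝ × ℝ) × ℝ × ℝ => (x.1.1, x.1.2, x.2.2, x.2.1))
  · rintro ⟨⟨a, b⟩, c, d⟩ hx
    simp only [mem_coe, mem_filter, mem_product] at hx ⊢
    obtain ⟨⟨⟨ha, hb⟩, hc, hd⟩, h⟩ := hx
    exact ⟨⟨ha, hb, hd, hc⟩, by linarith⟩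
  · rintro ⟨⟨a, b⟩, c, d⟩ _ ⟨⟨a', b'⟩, c', d'⟩ _ h
    simp only [Prod.mk.injEq] at h ⊢
    tauto

lemma energy_sub_le (A : Finset ℝ) : addEnergy A (-A) ≤ A.card ^ 2 + (ntQuads A).card := by
  refine le_trans ?_ (trivial_le A)
  unfold addEnergy
  apply Finset.card_le_card_of_injOn (fun x : (ℝ × ℝ) × ℝ × ℝ => (x.1.1, x.1.2, -x.2.1, -x.2.2))
  · rintro ⟨⟨a, b⟩, c, d⟩ hx
    simp only [mem_coe, mem_filter, mem_product, mem_neg'] at hx ⊢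
    obtain ⟨⟨⟨ha, hb⟩, hc, hd⟩, h⟩ := hx
    exact ⟨⟨ha, hb, hc, hd⟩, by linarith⟩
  · rintro ⟨⟨a, b⟩, c, d⟩ _ ⟨⟨a', b'⟩, c', d'⟩ _ h
    simp only [Prod.mk.injEq, neg_inj] at h ⊢
    tauto

lemma final_ineq {K δ n N S E T : ℝ} (hK : 0 < K) (hn : 1 ≤ n) (hT : 0 ≤ T)
    (h1 : S * n ^ 4 ≤ K * (N * n) ^ 3) (h2 : E ≤ n ^ 2 + S) (h3 : n ^ 2 * n ^ 2 ≤ T * E)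
    (hnN : n ≤ N) (hN : N ≤ n ^ ((1 : ℝ) + δ)) :
    1 / (1 + K) * n ^ ((2 : ℝ) - 3 * δ) ≤ T := by
  have n0 : 0 < n := by linarith
  have N0 : 0 < N := by linarith
  have hS : S * n ≤ K * N ^ 3 := by
    have : (S * n) * n ^ 3 ≤ (K * N ^ 3) * n ^ 3 := by nlinarith
    exact le_of_mul_le_mul_right this (by positivity)
  have hnN3 : n ^ 3 ≤ N ^ 3 := by gcongr
  have hE : n * E ≤ (1 + K) * N ^ 3 := by nlinarith
  have hN3 : N ^ 3 ≤ n ^ ((3 : ℝ) + 3 * δ) := by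
    calc N ^ 3 ≤ (n ^ ((1 : ℝ) + δ)) ^ 3 := by gcongr
      _ = n ^ ((3 : ℝ) + 3 * δ) := by
        rw [← Real.rpow_natCast, ← Real.rpow_mul n0.le]; congr 1; push_cast; ring
  have hsplit : n ^ ((2 : ℝ) - 3 * δ) * n ^ ((3 : ℝ) + 3 * δ) = n ^ 5 := by
    rw [← Real.rpow_add n0, ← Real.rpow_natCast]; congr 1; push_cast; ring
  have hpos : 0 < n ^ ((3 : ℝ) + 3 * δ) := by positivity
  have key : n ^ 5 ≤ T * ((1 + K) * n ^ ((3 : ℝ) + 3 * δ)) := by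
    calc n ^ 5 = n * (n ^ 2 * n ^ 2) := by ring
      _ ≤ n * (T * E) := by gcongr
      _ = T * (n * E) := by ring
      _ ≤ T * ((1 + K) * N ^ 3) := by gcongr
      _ ≤ _ := by gcongr
  rw [← hsplit] at key
  have : n ^ ((2 : ℝ) - 3 * δ) ≤ T * (1 + K) := by
    refine le_of_mul_le_mul_right ?_ hpos
    linarith
  rw [one_div, inv_mul_le_iff₀ (by positivity)]
  linarith

theorem stmt_17 (K : ℝ) (hK : 0 < K)
    (hyp : ∀ P : Finset (ℝ × ℝ), (∀ p ∈ P, p ≠ (0 : ℝ × ℝ)) →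
      ((omegaEnergy P : ℝ) ≤ K * (P.card : ℝ) ^ 3)) :
    ∃ c : ℝ, 0 < c ∧
      ∀ (δ : ℝ) (A : Finset ℝ), 0 < δ → (0 : ℝ) ∉ A → 2 ≤ A.card →
        (((A * A).card : ℝ) ≤ (A.card : ℝ) ^ ((1 : ℝ) + δ)) →
        c * (A.card : ℝ) ^ ((2 : ℝ) - 3 * δ) ≤ ((A + A).card : ℝ) ∧
        c * (A.card : ℝ) ^ ((2 : ℝ) - 3 * δ) ≤ ((A - A).card : ℝ) := by
  refine ⟨1 / (1 + K), by positivity, ?_⟩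
  intro δ A _ h0 hA hAA
  have hP := hyp ((A * A) ×ˢ A⁻¹) (by
    rintro ⟨x, y⟩ hp h
    rw [mem_product] at hp
    simp only [Prod.mk_eq_zero] at h
    have := hp.2
    rw [h.2, mem_inv'] at this
    simp at this
    exact h0 this)
  have hcard : (((A * A) ×ˢ A⁻¹).card : ℝ) = (A * A).card * A.card := by
    rw [card_product, card_inv]; push_cast; rfl
  rw [hcard] at hP
  have h1 : ((ntQuads A).card : ℝ) * (A.card : ℝ) ^ 4 ≤ K * ((A * A).card * A.card) ^ 3 := by
    refine le_trans ?_ hP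
    exact_mod_cast ntQuads_le A h0
  have hn : (1 : ℝ) ≤ A.card := by exact_mod_cast (by omega : 1 ≤ A.card)
  have hnN : (A.card : ℝ) ≤ (A * A).card := by
    obtain ⟨a, ha⟩ := card_pos.1 (by omega : 0 < A.card)
    have : A.card ≤ (A * A).card := by
      apply Finset.card_le_card_of_injOn (fun x => x * a)
      · intro x hx
        exact mul_mem_mul hx ha
      · intro x _ y _ h
        exact mul_right_cancel₀ (fun h => h0 (h ▸ ha)) h
    exact_mod_cast this
  constructor
  · refine final_ineq (E := addEnergy A A) hK hn (by positivity) h1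
      (by exact_mod_cast energy_add_le A) ?_ hnN hAA
    exact_mod_cast le_card_add_mul_addEnergy A A
  · refine final_ineq (E := addEnergy A (-A)) hK hn (by positivity) h1
      (by exact_mod_cast energy_sub_le A) ?_ hnN hAA
    have := le_card_add_mul_addEnergy A (-A)
    rw [card_neg, ← sub_eq_add_neg] at this
    exact_mod_cast this
end

section
/- There exists an absolute constant C > 0 such that for every finite set P of N points in ℝ² and every nonzero real number t, the number of pairs (q,q') ∈ P × P with ω(q,q') = t is at most C·N^(4/3). -/
open Finset
open scoped Classical

noncomputable def stSl {V : Type} (px py : V → ℝ) (e : V × V) : ℝ :=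
  (py e.2 - py e.1) / (px e.2 - px e.1)

/-- the affine function whose graph is the line through the edge -/
noncomputable def stL {V : Type} (px py : V → ℝ) (e : V × V) (x : ℝ) : ℝ :=
  py e.1 + stSl px py e * (x - px e.1)

theorem stL_left {V : Type} (px py : V → ℝ) (e : V × V) :
    stL px py e (px e.1) = py e.1 := by simp [stL]

theorem stL_right {V : Type} (px py : V → ℝ) (e : V × V) (h : px e.1 < px e.2) :
    stL px py e (px e.2) = py e.2 := by
  have : px e.2 - px e.1 ≠ 0 := (sub_pos.2 h).ne'
  simp only [stL, stSl]
  field_simp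
  ring

theorem stL_sub {V : Type} (px py : V → ℝ) (e : V × V) (x z : ℝ) :
    stL px py e x = stL px py e z + stSl px py e * (x - z) := by
  simp only [stL]; ring

/-- the two edges cross -/
def stCross {V : Type} (px py : V → ℝ) (e f : V × V) : Prop :=
  ∃ x1 x2 : ℝ, px e.1 ≤ x1 ∧ x1 ≤ px e.2 ∧ px f.1 ≤ x1 ∧ x1 ≤ px f.2 ∧
    px e.1 ≤ x2 ∧ x2 ≤ px e.2 ∧ px f.1 ≤ x2 ∧ x2 ≤ px f.2 ∧
    stL px py e x1 < stL px py f x1 ∧ stL px py f x2 < stL px py e x2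

/-- `v` is the first point in the wedge between `e` and the next edge `g` above it -/
structure stWedge {V : Type} (px py : V → ℝ) (S : Finset V) (E : Finset (V × V))
    (e g : V × V) (v : V) : Prop where
  he : e ∈ E
  hg : g ∈ E
  h1 : g.1 = e.1
  hs : stSl px py e < stSl px py g
  hn : ∀ f ∈ E, f.1 = e.1 → stSl px py e < stSl px py f → stSl px py g ≤ stSl px py f
  hl : px e.1 < px v
  hre : px v ≤ px e.2
  hrg : px v ≤ px g.2
  hm : ∀ c ∈ S, px e.1 < px c → px c < px v → stL px py e (px c) ≤ py c →
    py c ≤ stL px py g (px c) → False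

theorem stL_wedge_lt {V : Type} {px py : V → ℝ} {e g : V × V} (h1 : g.1 = e.1)
    (hs : stSl px py e < stSl px py g) {x : ℝ} (hx : px e.1 < x) :
    stL px py e x < stL px py g x := by
  simp only [stL, h1]
  have := mul_lt_mul_of_pos_right hs (sub_pos.2 hx)
  linarith

section planar
variable {V : Type} {px py : V → ℝ} {S : Finset V} {E : Finset (V × V)}

theorem st_unique_left (hinj : Function.Injective px)
    (hlt : ∀ e ∈ E, px e.1 < px e.2) (hS : ∀ e ∈ E, e.1 ∈ S ∧ e.2 ∈ S)
    (h2 : ∀ e ∈ E, ∀ c ∈ S, px e.1 < px c → px c < px e.2 → py c ≠ stL px py e (px c))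
    {e f : V × V} (he : e ∈ E) (hf : f ∈ E) (h1 : e.1 = f.1)
    (hs : stSl px py e = stSl px py f) : e = f := by
  have hL : ∀ x, stL px py e x = stL px py f x := by intro x; simp only [stL, h1, hs]
  rcases lt_trichotomy (px e.2) (px f.2) with h | h | h
  · exact absurd (by rw [← hL, stL_right _ _ _ (hlt e he)])
      (h2 f hf e.2 (hS e he).2 (h1 ▸ hlt e he) h)
  · exact Prod.ext h1 (hinj h)
  · exact absurd (by rw [hL, stL_right _ _ _ (hlt f hf)])
      (h2 e he f.2 (hS f hf).2 (h1 ▸ hlt f hf) h)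

theorem st_unique_right (hinj : Function.Injective px)
    (hlt : ∀ e ∈ E, px e.1 < px e.2) (hS : ∀ e ∈ E, e.1 ∈ S ∧ e.2 ∈ S)
    (h2 : ∀ e ∈ E, ∀ c ∈ S, px e.1 < px c → px c < px e.2 → py c ≠ stL px py e (px c))
    {e f : V × V} (he : e ∈ E) (hf : f ∈ E) (h1 : e.2 = f.2)
    (hs : stSl px py e = stSl px py f) : e = f := by
  have hL : ∀ x, stL px py e x = stL px py f x := by
    intro x
    rw [stL_sub px py e x (px e.2), stL_sub px py f x (px f.2), stL_right _ _ _ (hlt e he),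
      stL_right _ _ _ (hlt f hf), h1, hs]
  rcases lt_trichotomy (px e.1) (px f.1) with h | h | h
  · exact absurd (by rw [hL, stL_left])
      (h2 e he f.1 (hS f hf).1 h (h1 ▸ hlt f hf))
  · exact Prod.ext (hinj h) h1
  · exact absurd (by rw [← hL, stL_left])
      (h2 f hf e.1 (hS e he).1 h (h1 ▸ hlt e he))

/-- case 1 -/
theorem st_case1 
    (hlt : ∀ e ∈ E, px e.1 < px e.2) (hS : ∀ e ∈ E, e.1 ∈ S ∧ e.2 ∈ S)
    (h3 : ∀ e ∈ E, ∀ f ∈ E, ¬ stCross px py e f)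
    {e g e' : V × V} {v : V} (hw : stWedge px py S E e g v) (hv : e.2 = v) (he' : e' ∈ E)
    (hv' : e'.2 = v) (hs : stSl px py e' < stSl px py e) : False := by
  have hlt' := hlt e' he'
  have hl := hw.hl
  have hrg := hw.hrg
  have a1 : stL px py e' (px v) = py v := by rw [← hv', stL_right _ _ _ hlt']
  have a2 : stL px py e (px v) = py v := by rw [← hv, stL_right _ _ _ (hlt e hw.he)]
  have a3 : stL px py e (px v) < stL px py g (px v) := stL_wedge_lt hw.h1 hw.hs hl
  have ab : ∀ x, x < px v → stL px py e x < stL px py e' x := by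
    intro x hx
    rw [stL_sub px py e x (px v), stL_sub px py e' x (px v), a1, a2]
    nlinarith
  have hg1 : px g.1 = px e.1 := by rw [hw.h1]
  have hv2 : px e'.2 = px v := by rw [hv']
  rcases lt_or_ge (px e.1) (px e'.1) with h | h
  · have hb := ab (px e'.1) (by linarith)
    rw [stL_left] at hb
    by_cases hc : py e'.1 ≤ stL px py g (px e'.1)
    · exact hw.hm _ (hS e' he').1 h (by linarith) hb.le hc
    · apply h3 g hw.hg e' he'
      refine ⟨px e'.1, px v, by linarith, by linarith, by linarith, by linarith, by linarith,
        by linarith, by linarith, by linarith, ?_, by linarith⟩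
      rw [stL_left]; linarith
  · apply h3 g hw.hg e' he'
    have hb := ab (px e.1) hl
    have : stL px py g (px e.1) = stL px py e (px e.1) := by
      rw [← hg1, stL_left, hg1, stL_left, hw.h1]
    exact ⟨px e.1, px v, by linarith, by linarith, by linarith, by linarith, by linarith,
        by linarith, by linarith, by linarith, by linarith, by linarith⟩

/-- case 2 -/
theorem st_case2 
    (hlt : ∀ e ∈ E, px e.1 < px e.2) (hS : ∀ e ∈ E, e.1 ∈ S ∧ e.2 ∈ S)
    (h3 : ∀ e ∈ E, ∀ f ∈ E, ¬ stCross px py e f)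
    {e g e' : V × V} {v : V} (hw : stWedge px py S E e g v) (hv : g.2 = v) (he' : e' ∈ E)
    (hv' : e'.2 = v) (hs : stSl px py g < stSl px py e') : False := by
  have hlt' := hlt e' he'
  have hl := hw.hl
  have hre := hw.hre
  have a1 : stL px py e' (px v) = py v := by rw [← hv', stL_right _ _ _ hlt']
  have a2 : stL px py g (px v) = py v := by rw [← hv, stL_right _ _ _ (hlt g hw.hg)]
  have a3 : stL px py e (px v) < stL px py g (px v) := stL_wedge_lt hw.h1 hw.hs hl
  have ab : ∀ x, x < px v → stL px py e' x < stL px py g x := by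
    intro x hx
    rw [stL_sub px py g x (px v), stL_sub px py e' x (px v), a1, a2]
    nlinarith
  have hg1 : px g.1 = px e.1 := by rw [hw.h1]
  have hv2 : px e'.2 = px v := by rw [hv']
  rcases lt_or_ge (px e.1) (px e'.1) with h | h
  · have hb := ab (px e'.1) (by linarith)
    rw [stL_left] at hb
    by_cases hc : stL px py e (px e'.1) ≤ py e'.1
    · exact hw.hm _ (hS e' he').1 h (by linarith) hc hb.le
    · apply h3 e' he' e hw.he
      refine ⟨px e'.1, px v, by linarith, by linarith, by linarith, by linarith, by linarith,
        by linarith, by linarith, by linarith, ?_, by linarith⟩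
      rw [stL_left]; linarith
  · apply h3 e' he' e hw.he
    have hb := ab (px e.1) hl
    have : stL px py g (px e.1) = stL px py e (px e.1) := by
      rw [← hg1, stL_left, hg1, stL_left, hw.h1]
    exact ⟨px e.1, px v, by linarith, by linarith, by linarith, by linarith, by linarith,
        by linarith, by linarith, by linarith, by linarith, by linarith⟩

/-- case 3 -/
theorem st_case3 
    (hS : ∀ e ∈ E, e.1 ∈ S ∧ e.2 ∈ S)
    (h3 : ∀ e ∈ E, ∀ f ∈ E, ¬ stCross px py e f)
    {e g e' g' : V × V} {v : V} (hw : stWedge px py S E e g v)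
    (hw' : stWedge px py S E e' g' v)
    (k1 : stL px py e (px v) < py v) (k2 : py v < stL px py g (px v))
    (k1' : stL px py e' (px v) < py v) (k2' : py v < stL px py g' (px v))
    (hs : px e.1 < px e'.1) : False := by
  have hl := hw.hl
  have hre := hw.hre
  have hrg := hw.hrg
  have hl' := hw'.hl
  have hre' := hw'.hre
  have hrg' := hw'.hrg
  have hg1 : px g.1 = px e.1 := by rw [hw.h1]
  have hg1' : px g'.1 = px e'.1 := by rw [hw'.h1]
  have b1 : stL px py e' (px e'.1) = py e'.1 := stL_left _ _ _
  have b2 : stL px py g' (px e'.1) = py e'.1 := by rw [← hg1', stL_left, hw'.h1]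
  by_cases c1 : stL px py e (px e'.1) ≤ py e'.1
  · by_cases c2 : py e'.1 ≤ stL px py g (px e'.1)
    · exact hw.hm _ (hS e' hw'.he).1 hs hl' c1 c2
    · apply h3 g hw.hg e' hw'.he
      exact ⟨px e'.1, px v, by linarith, by linarith, by linarith, by linarith, by linarith,
        by linarith, by linarith, by linarith, by linarith, by linarith⟩
  · apply h3 g' hw'.hg e hw.he
    exact ⟨px e'.1, px v, by linarith, by linarith, by linarith, by linarith, by linarith,
        by linarith, by linarith, by linarith, by linarith, by linarith⟩

/-- charging relation -/
def stR (px py : V → ℝ) (S : Finset V) (E : Finset (V × V)) (k : Fin 4) (v : V)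
    (e : V × V) : Prop :=
  (k = 0 ∧ e.1 = v ∧ ∀ f ∈ E, f.1 = e.1 → stSl px py f ≤ stSl px py e) ∨
  (k = 1 ∧ ∃ g, stWedge px py S E e g v ∧ e.2 = v) ∨
  (k = 2 ∧ ∃ g, stWedge px py S E e g v ∧ g.2 = v) ∨
  (k = 3 ∧ ∃ g, stWedge px py S E e g v ∧
    stL px py e (px v) < py v ∧ py v < stL px py g (px v))

theorem stR_exists (hinj : Function.Injective px)
    (hlt : ∀ e ∈ E, px e.1 < px e.2) (hS : ∀ e ∈ E, e.1 ∈ S ∧ e.2 ∈ S)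
    (h2 : ∀ e ∈ E, ∀ c ∈ S, px e.1 < px c → px c < px e.2 → py c ≠ stL px py e (px c))
    {e : V × V} (he : e ∈ E) : ∃ k : Fin 4, ∃ v ∈ S, stR px py S E k v e := by
  by_cases hU : ∀ f ∈ E, f.1 = e.1 → stSl px py f ≤ stSl px py e
  · exact ⟨0, e.1, (hS e he).1, Or.inl ⟨rfl, rfl, hU⟩⟩
  · push Not at hU
    obtain ⟨f0, hf0, hf1, hf2⟩ := hU
    obtain ⟨g, hg, hgm⟩ := Finset.exists_min_image
      (E.filter fun f => f.1 = e.1 ∧ stSl px py e < stSl px py f) (stSl px py)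
      ⟨f0, by simp [hf0, hf1, hf2]⟩
    simp only [Finset.mem_filter] at hg hgm
    obtain ⟨hgE, hg1, hgs⟩ := hg
    have hltg := hlt g hgE
    have hlte := hlt e he
    have hpg : px g.1 = px e.1 := by rw [hg1]
    obtain ⟨v, hv, hvm⟩ := Finset.exists_min_image
      (S.filter fun c => px e.1 < px c ∧ px c ≤ px e.2 ∧ px c ≤ px g.2 ∧
        stL px py e (px c) ≤ py c ∧ py c ≤ stL px py g (px c)) px (by
        rcases le_total (px e.2) (px g.2) with h | h
        · refine ⟨e.2, ?_⟩
          have := stL_wedge_lt hg1 hgs hlte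
          rw [stL_right _ _ _ hlte] at this
          simp [(hS e he).2, hlte, h, stL_right _ _ _ hlte, this.le]
        · refine ⟨g.2, ?_⟩
          have := stL_wedge_lt hg1 hgs (x := px g.2) (by linarith)
          rw [stL_right _ _ _ hltg] at this
          rw [hpg] at hltg
          simp [(hS g hgE).2, hltg, h, stL_right _ _ _ (hlt g hgE), this.le])
    simp only [Finset.mem_filter] at hv hvm
    obtain ⟨hvS, v1, v2, v3, v4, v5⟩ := hv
    have hw : stWedge px py S E e g v := by
      refine ⟨he, hgE, hg1, hgs, fun f hf h1 h2 => hgm f ⟨hf, h1, h2⟩, v1, v2, v3, ?_⟩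
      intro c hc c1 c2 c3 c4
      have := hvm c ⟨hc, c1, by linarith, by linarith, c3, c4⟩
      linarith
    by_cases d1 : e.2 = v
    · exact ⟨1, v, hvS, Or.inr (Or.inl ⟨rfl, g, hw, d1⟩)⟩
    by_cases d2 : g.2 = v
    · exact ⟨2, v, hvS, Or.inr (Or.inr (Or.inl ⟨rfl, g, hw, d2⟩))⟩
    have d1' : px v < px e.2 := lt_of_le_of_ne v2 fun h => d1 (hinj h).symm
    have d2' : px v < px g.2 := lt_of_le_of_ne v3 fun h => d2 (hinj h).symm
    refine ⟨3, v, hvS, Or.inr (Or.inr (Or.inr ⟨rfl, g, hw, ?_, ?_⟩))⟩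
    · exact lt_of_le_of_ne v4 (h2 e he v hvS v1 d1').symm
    · exact lt_of_le_of_ne v5 (h2 g hgE v hvS (by linarith) d2')

theorem stR_unique (hinj : Function.Injective px)
    (hlt : ∀ e ∈ E, px e.1 < px e.2) (hS : ∀ e ∈ E, e.1 ∈ S ∧ e.2 ∈ S)
    (h2 : ∀ e ∈ E, ∀ c ∈ S, px e.1 < px c → px c < px e.2 → py c ≠ stL px py e (px c))
    (h3 : ∀ e ∈ E, ∀ f ∈ E, ¬ stCross px py e f)
    {e e' : V × V} (he : e ∈ E) (he' : e' ∈ E) {k : Fin 4} {v : V}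
    (h : stR px py S E k v e) (h' : stR px py S E k v e') : e = e' := by
  have left : ∀ {e e' g : V × V}, stWedge px py S E e g v → e' ∈ E → e'.1 = e.1 →
      stSl px py e < stSl px py e' → stSl px py e' < stSl px py g → False := by
    intro e e' g hw h1 h2 h3 h4
    have := hw.hn e' h1 h2 h3
    linarith
  rcases h with ⟨rfl, a, b⟩ | ⟨rfl, g, hw, a⟩ | ⟨rfl, g, hw, a⟩ | ⟨rfl, g, hw, a, b⟩
  · rcases h' with ⟨_, a', b'⟩ | ⟨h, _⟩ | ⟨h, _⟩ | ⟨h, _⟩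
    · exact st_unique_left hinj hlt hS h2 he he' (a.trans a'.symm)
        (le_antisymm (b' e he (a.trans a'.symm)) (b e' he' (a'.trans a.symm)))
    all_goals exact absurd h (by decide)
  · rcases h' with ⟨h, _⟩ | ⟨_, g', hw', a'⟩ | ⟨h, _⟩ | ⟨h, _⟩
    · exact absurd h (by decide)
    · rcases lt_trichotomy (stSl px py e) (stSl px py e') with h | h | h
      · exact (st_case1 hlt hS h3 hw' a' he a h).elim
      · exact st_unique_right hinj hlt hS h2 he he' (a.trans a'.symm) h
      · exact (st_case1 hlt hS h3 hw a he' a' h).elim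
    all_goals exact absurd h (by decide)
  · rcases h' with ⟨h, _⟩ | ⟨h, _⟩ | ⟨_, g', hw', a'⟩ | ⟨h, _⟩
    · exact absurd h (by decide)
    · exact absurd h (by decide)
    · rcases lt_trichotomy (stSl px py g) (stSl px py g') with h | h | h
      · exact (st_case2 hlt hS h3 hw a hw'.hg a' h).elim
      · have hgg := st_unique_right hinj hlt hS h2 hw.hg hw'.hg (a.trans a'.symm) h
        subst hgg
        have h1 : e.1 = e'.1 := hw.h1.symm.trans hw'.h1
        rcases lt_trichotomy (stSl px py e) (stSl px py e') with h | h | h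
        · exact (left hw he' h1.symm h hw'.hs).elim
        · exact st_unique_left hinj hlt hS h2 he he' h1 h
        · exact (left hw' he h1 h hw.hs).elim
      · exact (st_case2 hlt hS h3 hw' a' hw.hg a h).elim
    · exact absurd h (by decide)
  · rcases h' with ⟨h, _⟩ | ⟨h, _⟩ | ⟨h, _⟩ | ⟨_, g', hw', a', b'⟩
    · exact absurd h (by decide)
    · exact absurd h (by decide)
    · exact absurd h (by decide)
    · rcases lt_trichotomy (px e.1) (px e'.1) with h | h | h
      · exact (st_case3 hS h3 hw hw' a b a' b' h).elim
      · have h1 : e.1 = e'.1 := hinj h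
        have key : ∀ {e e' g : V × V}, stWedge px py S E e g v → e' ∈ E → e'.1 = e.1 →
            py v < stL px py g (px v) → stL px py e' (px v) < py v →
            stSl px py e < stSl px py e' → False := by
          intro e e' g hw h1 h2 h3 h4 h5
          refine left hw h1 h2 h5 ?_
          by_contra hc
          push Not at hc
          have hl := hw.hl
          simp only [stL, h2, hw.h1] at h3 h4
          nlinarith
        rcases lt_trichotomy (stSl px py e) (stSl px py e') with h | h | h
        · exact (key hw he' h1.symm b a' h).elim
        · exact st_unique_left hinj hlt hS h2 he he' h1 h
        · exact (key hw' he h1 b' a h).elim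
      · exact (st_case3 hS h3 hw' hw a' b' a b h).elim

theorem st_planar (hinj : Function.Injective px)
    (hlt : ∀ e ∈ E, px e.1 < px e.2) (hS : ∀ e ∈ E, e.1 ∈ S ∧ e.2 ∈ S)
    (h2 : ∀ e ∈ E, ∀ c ∈ S, px e.1 < px c → px c < px e.2 → py c ≠ stL px py e (px c))
    (h3 : ∀ e ∈ E, ∀ f ∈ E, ¬ stCross px py e f) : E.card ≤ 4 * S.card := by
  have hex : ∀ e : V × V, ∃ kv : Fin 4 × V, e ∈ E → kv.2 ∈ S ∧ stR px py S E kv.1 kv.2 e := by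
    intro e
    by_cases he : e ∈ E
    · obtain ⟨k, v, hv, hr⟩ := stR_exists hinj hlt hS h2 he
      exact ⟨(k, v), fun _ => ⟨hv, hr⟩⟩
    · exact ⟨(0, e.1), fun h => absurd h he⟩
  choose F hF using hex
  have : E.card ≤ ((Finset.univ : Finset (Fin 4)) ×ˢ S).card := by
    refine Finset.card_le_card_of_injOn F ?_ ?_
    · intro e he
      simpa using (hF e he).1
    · intro e he e' he' hh
      have a := (hF e he).2
      have b := (hF e' he').2
      rw [← hh] at b
      exact stR_unique hinj hlt hS h2 h3 he he' a b
  simpa using this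

end planar

theorem st_count {V : Type} [Fintype V] (m : ℕ) (A : Finset V) :
    ((Finset.univ : Finset (V → Fin (m + 1))).filter fun f => ∀ a ∈ A, f a = 0).card
      * (m + 1) ^ A.card = (m + 1) ^ Fintype.card V := by
  have h : ((Finset.univ : Finset (V → Fin (m + 1))).filter fun f => ∀ a ∈ A, f a = 0)
      = Fintype.piFinset (fun a => if a ∈ A then {0} else Finset.univ) := by
    ext f
    simp only [Finset.mem_filter, Finset.mem_univ, true_and, Fintype.mem_piFinset]
    refine forall_congr' fun a => ?_
    by_cases ha : a ∈ A <;> simp [ha]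
  rw [h, Fintype.card_piFinset]
  have h2 : (m + 1) ^ A.card = ∏ a : V, if a ∈ A then (m + 1) else 1 := by
    rw [Finset.prod_ite_mem]; simp
  rw [h2, ← Finset.prod_mul_distrib, ← Finset.card_univ, ← Finset.prod_const]
  refine Finset.prod_congr rfl fun a _ => ?_
  by_cases ha : a ∈ A <;> simp [ha]

/-- double counting over all colourings -/
theorem st_double {V T : Type} [Fintype V] (m k : ℕ) (E : Finset T) (A : T → Finset V)
    (hA : ∀ e ∈ E, (A e).card = k) :
    (∑ f : V → Fin (m + 1), (E.filter fun e => ∀ a ∈ A e, f a = 0).card) * (m + 1) ^ k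
      = E.card * (m + 1) ^ Fintype.card V := by
  have : ∑ f : V → Fin (m + 1), (E.filter fun e => ∀ a ∈ A e, f a = 0).card
      = ∑ e ∈ E, ((Finset.univ : Finset (V → Fin (m + 1))).filter
          fun f => ∀ a ∈ A e, f a = 0).card := by
    simp only [Finset.card_filter]
    exact Finset.sum_comm
  rw [this, Finset.sum_mul, Finset.card_eq_sum_ones, Finset.sum_mul]
  refine Finset.sum_congr rfl fun e he => ?_
  have := st_count m (A e)
  rw [hA e he] at this
  simpa using this

theorem st_sampling {V : Type} [Fintype V] (E : Finset (V × V))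
    (X : Finset ((V × V) × (V × V)))
    (hE : ∀ e ∈ E, e.1 ≠ e.2)
    (hX : ∀ x ∈ X, ({x.1.1, x.1.2, x.2.1, x.2.2} : Finset V).card = 4)
    (h : ∀ S : Finset V, (E.filter fun e => e.1 ∈ S ∧ e.2 ∈ S).card ≤ 4 * S.card +
      (X.filter fun x => (x.1.1 ∈ S ∧ x.1.2 ∈ S) ∧ (x.2.1 ∈ S ∧ x.2.2 ∈ S)).card)
    (m : ℕ) : E.card * (m + 1) ^ 2 ≤ 4 * Fintype.card V * (m + 1) ^ 3 + X.card := by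
  have d1 := st_double m 2 E (fun e => ({e.1, e.2} : Finset V))
    (fun e he => Finset.card_pair (hE e he))
  have d2 := st_double m 4 X (fun x => ({x.1.1, x.1.2, x.2.1, x.2.2} : Finset V)) hX
  have d3 := st_double m 1 (Finset.univ : Finset V) (fun v => ({v} : Finset V)) (by simp)
  have hs : (∑ f : V → Fin (m + 1),
        (E.filter fun e => ∀ a ∈ ({e.1, e.2} : Finset V), f a = 0).card)
      ≤ 4 * (∑ f : V → Fin (m + 1),
        ((Finset.univ : Finset V).filter fun v => ∀ a ∈ ({v} : Finset V), f a = 0).card)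
       + (∑ f : V → Fin (m + 1),
        (X.filter fun x => ∀ a ∈ ({x.1.1, x.1.2, x.2.1, x.2.2} : Finset V), f a = 0).card) := by
    rw [Finset.mul_sum, ← Finset.sum_add_distrib]
    refine Finset.sum_le_sum fun f _ => ?_
    have := h (Finset.univ.filter fun v => f v = 0)
    simpa [and_assoc] using this
  set s1 := ∑ f : V → Fin (m + 1),
        (E.filter fun e => ∀ a ∈ ({e.1, e.2} : Finset V), f a = 0).card
  set s2 := ∑ f : V → Fin (m + 1),
        (X.filter fun x => ∀ a ∈ ({x.1.1, x.1.2, x.2.1, x.2.2} : Finset V), f a = 0).card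
  set s3 := ∑ f : V → Fin (m + 1),
        ((Finset.univ : Finset V).filter fun v => ∀ a ∈ ({v} : Finset V), f a = 0).card
  rw [Finset.card_univ] at d3
  set M := (m + 1) ^ Fintype.card V with hM
  have hMpos : 0 < M := by positivity
  refine Nat.le_of_mul_le_mul_right (c := M) ?_ hMpos
  calc E.card * (m + 1) ^ 2 * M = s1 * (m + 1) ^ 4 := by
        rw [mul_right_comm, ← d1]; ring
    _ ≤ (4 * s3 + s2) * (m + 1) ^ 4 := Nat.mul_le_mul_right _ hs
    _ = 4 * (s3 * (m + 1) ^ 1) * (m + 1) ^ 3 + s2 * (m + 1) ^ 4 := by ring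
    _ = _ := by rw [d2, d3]; ring

/-- crossing lemma, unamplified, for all induced subgraphs -/
theorem st_cross_sub {V : Type} [Fintype V] {px py : V → ℝ} (hinj : Function.Injective px)
    (E : Finset (V × V)) (hlt : ∀ e ∈ E, px e.1 < px e.2)
    (h2 : ∀ e ∈ E, ∀ c, px e.1 < px c → px c < px e.2 → py c ≠ stL px py e (px c))
    (S : Finset V) :
    (E.filter fun e => e.1 ∈ S ∧ e.2 ∈ S).card ≤ 4 * S.card +
      (((E ×ˢ E).filter fun x => stCross px py x.1 x.2).filter
        fun x => (x.1.1 ∈ S ∧ x.1.2 ∈ S) ∧ (x.2.1 ∈ S ∧ x.2.2 ∈ S)).card := by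
  set ES := E.filter fun e => e.1 ∈ S ∧ e.2 ∈ S with hES
  set XS := (((E ×ˢ E).filter fun x => stCross px py x.1 x.2).filter
        fun x => (x.1.1 ∈ S ∧ x.1.2 ∈ S) ∧ (x.2.1 ∈ S ∧ x.2.2 ∈ S)) with hXS
  have h := st_planar (S := S) (E := ES \ XS.image Prod.fst) (px := px) (py := py) hinj
    (fun e he => hlt e (by simp [hES] at he; exact he.1.1))
    (fun e he => by simp [hES] at he; exact he.1.2)
    (fun e he c _ => h2 e (by simp [hES] at he; exact he.1.1) c)
    (by
      intro e he f hf hc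
      rw [Finset.mem_sdiff] at he hf
      apply he.2
      rw [Finset.mem_image]
      refine ⟨(e, f), ?_, rfl⟩
      have a := he.1
      have b := hf.1
      simp only [hES, Finset.mem_filter] at a b
      simp only [hXS, Finset.mem_filter, Finset.mem_product]
      exact ⟨⟨⟨a.1, b.1⟩, hc⟩, a.2, b.2⟩)
  have h' : ES.card ≤ (ES \ XS.image Prod.fst).card + (XS.image Prod.fst).card := by
    have := Finset.le_card_sdiff (XS.image Prod.fst) ES
    omega
  have h'' : (XS.image Prod.fst).card ≤ XS.card := Finset.card_image_le
  omega

theorem stCross_exists {V : Type} {px py : V → ℝ} {e f : V × V} (h : stCross px py e f) :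
    stSl px py e ≠ stSl px py f ∧ ∃ z, px e.1 < z ∧ z < px e.2 ∧ px f.1 < z ∧ z < px f.2 ∧
      stL px py e z = stL px py f z := by
  obtain ⟨x1, x2, a1, a2, a3, a4, b1, b2, b3, b4, c1, c2⟩ := h
  have hx : x1 ≠ x2 := by rintro rfl; linarith
  have e1 := stL_sub px py e x2 x1
  have e2 := stL_sub px py f x2 x1
  have hne : stSl px py e ≠ stSl px py f := by
    intro h; rw [h] at e1; linarith
  refine ⟨hne, ?_⟩
  have hcont : Continuous fun x => stL px py e x - stL px py f x := by
    unfold stL; fun_prop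
  have hz : ∃ z ∈ Set.uIcc x1 x2, stL px py e z - stL px py f z = 0 := by
    have := intermediate_value_uIcc (a := x1) (b := x2) hcont.continuousOn
    have h0 : (0 : ℝ) ∈ Set.uIcc (stL px py e x1 - stL px py f x1)
        (stL px py e x2 - stL px py f x2) := by
      rw [Set.mem_uIcc]; left; constructor <;> linarith
    exact this h0
  obtain ⟨z, hz, hz0⟩ := hz
  have n1 : z ≠ x1 := by rintro rfl; linarith
  have n2 : z ≠ x2 := by rintro rfl; linarith
  rw [Set.mem_uIcc] at hz
  rcases hz with ⟨l, r⟩ | ⟨l, r⟩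
  · have l' := lt_of_le_of_ne l n1.symm
    have r' := lt_of_le_of_ne r n2
    exact ⟨z, by linarith, by linarith, by linarith, by linarith, by linarith⟩
  · have l' := lt_of_le_of_ne l n2.symm
    have r' := lt_of_le_of_ne r n1
    exact ⟨z, by linarith, by linarith, by linarith, by linarith, by linarith⟩

theorem stCross_card {V : Type} {px py : V → ℝ} {e f : V × V} (h : stCross px py e f)
    : ({e.1, e.2, f.1, f.2} : Finset V).card = 4 := by
  obtain ⟨hne, z, a, b, c, d, hz⟩ := stCross_exists h
  have n1 : e.1 ≠ e.2 := by intro h; rw [h] at a; linarith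
  have n2 : f.1 ≠ f.2 := by intro h; rw [h] at c; linarith
  have n3 : e.1 ≠ f.2 := by intro h; rw [h] at a; linarith
  have n4 : e.2 ≠ f.1 := by intro h; rw [h] at b; linarith
  have n5 : e.1 ≠ f.1 := by
    intro h
    simp only [stL, h] at hz
    have : (stSl px py e - stSl px py f) * (z - px f.1) = 0 := by linarith
    rcases mul_eq_zero.1 this with h | h
    · exact hne (by linarith)
    · linarith
  have n6 : e.2 ≠ f.2 := by
    intro h
    rw [stL_sub px py e z (px e.2), stL_sub px py f z (px f.2), stL_right _ _ _ (by linarith),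
      stL_right _ _ _ (by linarith), h] at hz
    have : (stSl px py e - stSl px py f) * (z - px f.2) = 0 := by linarith
    rcases mul_eq_zero.1 this with h | h
    · exact hne (by linarith)
    · linarith
  rw [Finset.card_insert_of_notMem (by simp [n1, n3, n5]),
    Finset.card_insert_of_notMem (by simp [n4, n6]), Finset.card_pair n2]

theorem omega_key {q q' a b : ℝ × ℝ} {t : ℝ} (ht : t ≠ 0) (h1 : omegaForm q a = t)
    (h2 : omegaForm q b = t) (h3 : omegaForm q' a = t) (h4 : omegaForm q' b = t)
    (hab : a ≠ b) : q = q' := by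
  obtain ⟨q1, q2⟩ := q
  obtain ⟨r1, r2⟩ := q'
  obtain ⟨a1, a2⟩ := a
  obtain ⟨b1, b2⟩ := b
  simp only [omegaForm] at *
  have hD : a1 * b2 - a2 * b1 ≠ 0 := by
    intro hD
    apply hab
    have e1 : t * (a1 - b1) = 0 := by
      linear_combination b1 * h1 - a1 * h2 + q1 * hD
    have e2 : t * (a2 - b2) = 0 := by
      linear_combination b2 * h1 - a2 * h2 + q2 * hD
    have f1 := (mul_eq_zero.1 e1).resolve_left ht
    have f2 := (mul_eq_zero.1 e2).resolve_left ht
    ext <;> simp <;> linarith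
  have e1 : (q1 - r1) * (a1 * b2 - a2 * b1) = 0 := by
    linear_combination (-b1) * (h1 - h3) + a1 * (h2 - h4)
  have e2 : (q2 - r2) * (a1 * b2 - a2 * b1) = 0 := by
    linear_combination (-b2) * (h1 - h3) + a2 * (h2 - h4)
  have f1 := (mul_eq_zero.1 e1).resolve_right hD
  have f2 := (mul_eq_zero.1 e2).resolve_right hD
  ext <;> simp <;> linarith

section appl
variable (P : Finset (ℝ × ℝ)) (t : ℝ)

/-- `e` is a pair of consecutive points of `P` on the line of `q` -/
def stCons (q : P) (e : P × P) : Prop :=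
  e.1.1.1 < e.2.1.1 ∧ omegaForm q.1 e.1.1 = t ∧ omegaForm q.1 e.2.1 = t ∧
    ∀ c : P, omegaForm q.1 c.1 = t → e.1.1.1 < c.1.1 → c.1.1 < e.2.1.1 → False

theorem stCons_line {q : P} {e : P × P} (h : stCons P t q e) (x : ℝ) :
    omegaForm q.1 (x, stL (fun v : P => v.1.1) (fun v : P => v.1.2) e x) = t := by
  obtain ⟨h0, h1, h2, _⟩ := h
  have hs : stSl (fun v : P => v.1.1) (fun v : P => v.1.2) e * (e.2.1.1 - e.1.1.1)
      = e.2.1.2 - e.1.1.2 := by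
    simp only [stSl]
    exact div_mul_cancel₀ _ (sub_pos.2 h0).ne'
  simp only [omegaForm, stL] at *
  generalize stSl (fun v : P => v.1.1) (fun v : P => v.1.2) e = s at *
  have : (q.1.1 * s - q.1.2) * (e.2.1.1 - e.1.1.1) = 0 := by
    linear_combination q.1.1 * hs + h2 - h1
  have := (mul_eq_zero.1 this).resolve_right (sub_pos.2 h0).ne'
  linear_combination h1 + (x - e.1.1.1) * this

theorem st_main (ht : t ≠ 0) (hinj : Function.Injective fun v : P => v.1.1) (m : ℕ) :
    ((P ×ˢ P).filter fun qq => omegaForm qq.1 qq.2 = t).card * (m + 1) ^ 2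
      ≤ P.card * (m + 1) ^ 2 + 4 * P.card * (m + 1) ^ 3 + P.card ^ 2 := by
  set px : P → ℝ := fun v => v.1.1 with hpx
  set py : P → ℝ := fun v => v.1.2 with hpy
  set E : Finset (P × P) := Finset.univ.filter fun e => ∃ q : P, stCons P t q e with hE
  have hEx : ∀ e : P × P, ∃ q : P, e ∈ E → stCons P t q e := by
    intro e
    by_cases he : ∃ q : P, stCons P t q e
    · exact ⟨he.choose, fun _ => he.choose_spec⟩
    · exact ⟨e.1, fun h => by simp [hE] at h; exact absurd (by simpa using h) he⟩
  choose Q hQ using hEx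
  set X := (E ×ˢ E).filter fun x => stCross px py x.1 x.2 with hX
  have hsamp := st_sampling E X
    (fun e he h => by have := (hQ e he).1; rw [h] at this; exact lt_irrefl _ this)
    (fun x hx => stCross_card (Finset.mem_filter.1 hx).2)
    (fun S => st_cross_sub hinj E (fun e he => (hQ e he).1) (by
      intro e he c h1 h2 h3
      have := stCons_line P t (hQ e he) (px c)
      refine (hQ e he).2.2.2 c ?_ h1 h2
      rw [← this]
      exact congrArg _ (Prod.ext rfl h3)) S) m
  -- the number of crossings
  have hXc : X.card ≤ P.card ^ 2 := by
    have : X.card ≤ (Finset.univ : Finset (P × P)).card := by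
      refine Finset.card_le_card_of_injOn (fun x => (Q x.1, Q x.2)) (by simp) ?_
      rintro ⟨e, f⟩ hx ⟨e', f'⟩ hx' hh
      have hx := Finset.mem_filter.1 hx
      have hx' := Finset.mem_filter.1 hx'
      simp only [Finset.mem_product] at hx hx'
      obtain ⟨⟨he, hf⟩, hc⟩ := hx
      obtain ⟨⟨he', hf'⟩, hc'⟩ := hx'
      simp only [Prod.mk.injEq] at hh
      obtain ⟨hh1, hh2⟩ := hh
      obtain ⟨hsl, z, a, b, c, d, hz⟩ := stCross_exists hc
      obtain ⟨hsl', z', a', b', c', d', hz'⟩ := stCross_exists hc'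
      have l1 := hQ e he
      have l2 := hQ f hf
      have l1' := hQ e' he'
      have l2' := hQ f' hf'
      rw [← hh1] at l1'
      rw [← hh2] at l2'
      have hqq : (Q e).1 ≠ (Q f).1 := by
        intro hq
        have hq : Q e = Q f := Subtype.ext hq
        rw [← hq] at l2
        have m1 := stCons_line P t l1
        have m2 := stCons_line P t l2
        have k1 := m1 (px e.1)
        have k2 := m1 (px e.2)
        have k3 := m2 (px e.1)
        have k4 := m2 (px e.2)
        have hl : px e.1 < px e.2 := l1.1
        have hq1 : (Q e).1.1 ≠ 0 := by
          intro h0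
          simp only [omegaForm, h0] at k1 k2
          have : (Q e).1.2 * (px e.2 - px e.1) = 0 := by linarith
          rcases mul_eq_zero.1 this with h | h
          · rw [h] at k1; apply ht; linarith
          · linarith
        have eqL : ∀ x, stL px py e x = stL px py f x := by
          intro x
          have k1 := m1 x
          have k2 := m2 x
          simp only [omegaForm] at k1 k2
          exact mul_left_cancel₀ hq1 (by linarith)
        apply hsl
        have w1 := eqL 0
        have w2 := eqL 1
        simp only [stL] at w1 w2
        linarith
      have hzz : z = z' := by
        by_contra hne
        apply hqq
        refine omega_key ht (stCons_line P t l1 z) (stCons_line P t l1' z') ?_ ?_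
          (fun h => hne (congrArg Prod.fst h))
        · have := stCons_line P t l2 z
          rw [← hz] at this
          exact this
        · have := stCons_line P t l2' z'
          rw [← hz'] at this
          exact this
      subst hzz
      have uniq : ∀ {q : P} {e e' : P × P}, stCons P t q e → stCons P t q e' →
          px e.1 < z → z < px e.2 → px e'.1 < z → z < px e'.2 → e = e' := by
        intro q e e' k k' a b a' b'
        refine Prod.ext (hinj (le_antisymm ?_ ?_)) (hinj (le_antisymm ?_ ?_))
        · by_contra hh
          exact k'.2.2.2 e.1 k.2.1 (not_le.1 hh) (a.trans b')
        · by_contra hh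
          exact k.2.2.2 e'.1 k'.2.1 (not_le.1 hh) (a'.trans b)
        · by_contra hh
          exact k.2.2.2 e'.2 k'.2.2.1 (a.trans b') (not_le.1 hh)
        · by_contra hh
          exact k'.2.2.2 e.2 k.2.2.1 (a'.trans b) (not_le.1 hh)
      exact Prod.ext (uniq l1 l1' a b a' b') (uniq l2 l2' c d c' d')
    simpa [sq] using this
  -- the number of incidences
  have hI : ((P ×ˢ P).filter fun qq => omegaForm qq.1 qq.2 = t).card ≤ P.card + E.card := by
    set I : Finset (P × P) := Finset.univ.filter fun x => omegaForm x.1.1 x.2.1 = t with hIdef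
    have hcI : ((P ×ˢ P).filter fun qq => omegaForm qq.1 qq.2 = t).card ≤ I.card := by
      have : ((P ×ˢ P).filter fun qq => omegaForm qq.1 qq.2 = t)
          ⊆ I.image fun x => (x.1.1, x.2.1) := by
        rintro ⟨a, b⟩ h
        simp only [Finset.mem_filter, Finset.mem_product] at h
        rw [Finset.mem_image]
        exact ⟨(⟨a, h.1.1⟩, ⟨b, h.1.2⟩), by simp [hIdef, h.2], rfl⟩
      exact (Finset.card_le_card this).trans Finset.card_image_le
    have hmap : ∀ x : P × P, ∃ y : P ⊕ (P × P), x ∈ I →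
        (y = Sum.inl x.1 ∧ ∀ c : P, omegaForm x.1.1 c.1 = t → px x.2 ≤ px c) ∨
        (∃ a, y = Sum.inr (a, x.2) ∧ stCons P t x.1 (a, x.2)) := by
      rintro ⟨q, b⟩
      by_cases hx : (q, b) ∈ I
      swap
      · exact ⟨Sum.inl q, fun h => absurd h hx⟩
      by_cases hmin : ∀ c : P, omegaForm q.1 c.1 = t → px b ≤ px c
      · exact ⟨Sum.inl q, fun _ => Or.inl ⟨rfl, hmin⟩⟩
      · push Not at hmin
        obtain ⟨c, hc1, hc2⟩ := hmin
        obtain ⟨a, ha, ham⟩ := Finset.exists_max_image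
          ((Finset.univ : Finset P).filter fun c => omegaForm q.1 c.1 = t ∧ px c < px b) px
          ⟨c, by simp only [Finset.mem_filter, Finset.mem_univ, true_and]; exact ⟨hc1, hc2⟩⟩
        simp only [Finset.mem_filter, Finset.mem_univ, true_and] at ha ham
        have hb := (Finset.mem_filter.1 hx).2
        refine ⟨Sum.inr (a, b), fun _ => Or.inr ⟨a, rfl, ha.2, ha.1, hb, ?_⟩⟩
        intro c h1 h2 h3
        have := ham c ⟨h1, h3⟩
        exact absurd h2 (not_lt.2 this)
    choose F hF using hmap
    have : I.card ≤ ((Finset.univ : Finset P).disjSum E).card := by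
      refine Finset.card_le_card_of_injOn F ?_ ?_
      · intro x hx
        rcases hF x hx with ⟨h, _⟩ | ⟨a, h, hc⟩
        · simp [h]
        · rw [h]
          simp only [Finset.mem_coe, Finset.inr_mem_disjSum, hE, Finset.mem_filter,
            Finset.mem_univ, true_and]
          exact ⟨x.1, hc⟩
      · intro x hx y hy hxy
        have wx : omegaForm x.1.1 x.2.1 = t := (Finset.mem_filter.1 hx).2
        have wy : omegaForm y.1.1 y.2.1 = t := (Finset.mem_filter.1 hy).2
        rcases hF x hx with ⟨h, g⟩ | ⟨a, h, hc⟩ <;> rcases hF y hy with ⟨h', g'⟩ | ⟨a', h', hc'⟩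
        · rw [h, h'] at hxy
          have hq : x.1 = y.1 := Sum.inl.inj hxy
          refine Prod.ext hq (hinj (le_antisymm (g _ ?_) (g' _ ?_)))
          · rw [hq]; exact wy
          · rw [← hq]; exact wx
        · rw [h, h'] at hxy; cases hxy
        · rw [h, h'] at hxy; cases hxy
        · rw [h, h'] at hxy
          have hq := Sum.inr.inj hxy
          simp only [Prod.mk.injEq] at hq
          obtain ⟨q1, q2⟩ := hq
          subst q1
          refine Prod.ext (Subtype.ext ?_) q2
          have k := hc.1
          refine omega_key ht hc.2.1 hc.2.2.1 hc'.2.1 (q2 ▸ hc'.2.2.1) ?_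
          intro hh
          exact absurd (congrArg Prod.fst hh) (ne_of_lt k)
    rw [Finset.card_disjSum] at this
    simp only [Finset.card_univ, Fintype.card_coe] at this
    omega
  rw [Fintype.card_coe] at hsamp
  nlinarith [Nat.mul_le_mul_right ((m + 1) ^ 2) hI]

end appl

theorem st_shear (P : Finset (ℝ × ℝ)) :
    ∃ s : ℝ, Set.InjOn (fun q : ℝ × ℝ => q.1 + s * q.2) P := by
  obtain ⟨s, hs⟩ := Infinite.exists_notMem_finset
    ((P ×ˢ P).image fun x => -(x.1.1 - x.2.1) / (x.1.2 - x.2.2))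
  refine ⟨s, ?_⟩
  intro a ha b hb hab
  simp only at hab
  by_cases h2 : a.2 = b.2
  · rw [h2] at hab
    exact Prod.ext (by linarith) h2
  · exfalso
    apply hs
    rw [Finset.mem_image]
    refine ⟨(a, b), by simpa using ⟨ha, hb⟩, ?_⟩
    have : a.2 - b.2 ≠ 0 := sub_ne_zero.2 h2
    rw [div_eq_iff this]
    simp only
    linarith

theorem st_main' (P : Finset (ℝ × ℝ)) (t : ℝ) (ht : t ≠ 0) (m : ℕ) :
    ((P ×ˢ P).filter fun qq => omegaForm qq.1 qq.2 = t).card * (m + 1) ^ 2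
      ≤ P.card * (m + 1) ^ 2 + 4 * P.card * (m + 1) ^ 3 + P.card ^ 2 := by
  obtain ⟨s, hs⟩ := st_shear P
  set T : ℝ × ℝ → ℝ × ℝ := fun q => (q.1 + s * q.2, q.2) with hT
  have hTinj : Function.Injective T := by
    intro a b h
    simp only [hT, Prod.mk.injEq] at h
    obtain ⟨h1, h2⟩ := h
    rw [h2] at h1
    exact Prod.ext (by linarith) h2
  have hω : ∀ a b, omegaForm (T a) (T b) = omegaForm a b := by
    intro a b; simp only [omegaForm, hT]; ring
  have hm := st_main (P.image T) t ht (by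
    rintro ⟨a, ha⟩ ⟨b, hb⟩ h
    rw [Finset.mem_image] at ha hb
    obtain ⟨a, ha0, rfl⟩ := ha
    obtain ⟨b, hb0, rfl⟩ := hb
    have := hs ha0 hb0 h
    subst this
    rfl) m
  rw [Finset.card_image_of_injective _ hTinj] at hm
  refine le_trans (Nat.mul_le_mul_right _ ?_) hm
  refine Finset.card_le_card_of_injOn (fun x => (T x.1, T x.2)) ?_ ?_
  · rintro ⟨a, b⟩ h
    simp only [Finset.coe_filter, Finset.mem_product, Set.mem_ofPred_eq] at h ⊢
    exact ⟨⟨Finset.mem_image_of_mem _ h.1.1, Finset.mem_image_of_mem _ h.1.2⟩, by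
      rw [hω]; exact h.2⟩
  · rintro ⟨a, b⟩ _ ⟨c, d⟩ _ h
    simp only [Prod.mk.injEq] at h
    exact Prod.ext (hTinj h.1) (hTinj h.2)

theorem stmt_18 :
    ∃ C : ℝ, 0 < C ∧
      ∀ (P : Finset (ℝ × ℝ)) (t : ℝ), t ≠ 0 →
        ((((P ×ˢ P).filter fun qq => omegaForm qq.1 qq.2 = t).card : ℝ)
          ≤ C * (P.card : ℝ) ^ ((4 : ℝ) / 3)) := by
  refine ⟨10, by norm_num, ?_⟩
  intro P t ht
  rcases Nat.eq_zero_or_pos P.card with h0 | hpos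
  · rw [Finset.card_eq_zero] at h0
    subst h0
    simp
  set u : ℝ := (P.card : ℝ) ^ ((1 : ℝ) / 3) with hu
  have hn : (1 : ℝ) ≤ P.card := by exact_mod_cast hpos
  have hu1 : 1 ≤ u := Real.one_le_rpow hn (by norm_num)
  have hu3 : u ^ 3 = P.card := by
    rw [hu, ← Real.rpow_natCast, ← Real.rpow_mul (by linarith)]; norm_num
  have hu4 : (P.card : ℝ) ^ ((4 : ℝ) / 3) = u ^ 4 := by
    rw [hu, ← Real.rpow_natCast, ← Real.rpow_mul (by linarith)]; norm_num
  have hm := st_main' P t ht ⌊u⌋₊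
  set I := ((P ×ˢ P).filter fun qq => omegaForm qq.1 qq.2 = t).card
  have hm' : (I : ℝ) * ((⌊u⌋₊ : ℝ) + 1) ^ 2 ≤ P.card * ((⌊u⌋₊ : ℝ) + 1) ^ 2
      + 4 * P.card * ((⌊u⌋₊ : ℝ) + 1) ^ 3 + (P.card : ℝ) ^ 2 := by exact_mod_cast hm
  have k1 : u ≤ (⌊u⌋₊ : ℝ) + 1 := (Nat.lt_floor_add_one u).le
  have k2 : (⌊u⌋₊ : ℝ) + 1 ≤ 2 * u := by
    have := Nat.floor_le (show 0 ≤ u by linarith)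
    linarith
  rw [hu4]
  rw [← hu3] at hm'
  generalize (⌊u⌋₊ : ℝ) + 1 = w at *
  have hw : 0 < w ^ 2 := by have : 0 < w := by linarith
                            positivity
  refine le_of_mul_le_mul_right ?_ hw
  have hw2 : u ^ 2 ≤ w ^ 2 := by gcongr
  have p1 : u ^ 3 * w ^ 2 ≤ u ^ 4 * w ^ 2 := by
    gcongr
    norm_num
  have p2 : 4 * u ^ 3 * w ^ 3 ≤ 8 * u ^ 4 * w ^ 2 := by
    have : u ^ 3 * w ^ 2 * w ≤ u ^ 3 * w ^ 2 * (2 * u) := by gcongr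
    nlinarith
  have p3 : (u ^ 3) ^ 2 ≤ u ^ 4 * w ^ 2 := by
    have : u ^ 4 * u ^ 2 ≤ u ^ 4 * w ^ 2 := by gcongr
    nlinarith
  linarith
end
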